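/- Let n ≥ 3. For each m ∈ ℕ ∪ {∞}, let x_1^{(m)}, …, x_n^{(m)} be distinct real numbers and let θ̂^{(m)} ∈ ℍ be the unique maximizer over ℍ of the Cauchy likelihood of the sample (x_1^{(m)}, …, x_n^{(m)}). If (x_1^{(m)}, …, x_n^{(m)}) converges in ℝⁿ to (x_1^{(∞)}, …, x_n^{(∞)}) as m → ∞, then θ̂^{(m)} → θ̂^{(∞)} as m → ∞. -/

import Mathlib

open Complex Finset Filter

/-- The Cauchy likelihood of the sample `x` at parameter `θ = μ + iσ`. -/
noncomputable def cauchyL {n : ℕ} (x : Fin n → ℝ) (θ : ℂ) : ℝ :=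
  ∏ j, (θ.im / Real.pi) / ((x j - θ.re) ^ 2 + θ.im ^ 2)

noncomputable def qf (x : ℝ) (θ : ℂ) : ℝ := ((x - θ.re) ^ 2 + θ.im ^ 2) / θ.im

lemma qf_pos (x : ℝ) (θ : ℂ) (h : 0 < θ.im) : 0 < qf x θ := by
  unfold qf; positivity

lemma cauchyL_eq {n : ℕ} (x : Fin n → ℝ) (θ : ℂ) (h : 0 < θ.im) :
    cauchyL x θ = (∏ _j : Fin n, Real.pi⁻¹) / ∏ j, qf (x j) θ := by
  unfold cauchyL
  rw [← Finset.prod_div_distrib]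
  refine Finset.prod_congr rfl fun j _ => ?_
  have : 0 < (x j - θ.re) ^ 2 + θ.im ^ 2 := by positivity
  have := Real.pi_pos
  unfold qf
  field_simp

lemma le_iff_aux {n : ℕ} (x : Fin n → ℝ) (θ η : ℂ) (h : 0 < θ.im) (h' : 0 < η.im)
    (hle : cauchyL x θ ≤ cauchyL x η) : ∏ j, qf (x j) η ≤ ∏ j, qf (x j) θ := by
  rw [cauchyL_eq x θ h, cauchyL_eq x η h'] at hle
  have h1 : 0 < ∏ _j : Fin n, Real.pi⁻¹ := Finset.prod_pos fun _ _ => inv_pos.2 Real.pi_pos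
  have h2 : 0 < ∏ j, qf (x j) θ := Finset.prod_pos fun j _ => qf_pos _ _ h
  have h3 : 0 < ∏ j, qf (x j) η := Finset.prod_pos fun j _ => qf_pos _ _ h'
  exact (div_le_div_iff_of_pos_left h1 h2 h3).1 hle

lemma mid_exists (a b : ℂ) (ha : 0 < a.im) (hb : 0 < b.im) :
    ∃ m : ℂ, 0 < m.im ∧ ∀ x : ℝ, qf x a * qf x b - qf x m ^ 2 =
      ((b.re - a.re) * (x - a.re) * (x - b.re) + a.im ^ 2 * (x - b.re) - b.im ^ 2 * (x - a.re)) ^ 2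
        / (((a.re - b.re) ^ 2 + (a.im + b.im) ^ 2) * (a.im * b.im)) := by
  obtain ⟨p, s⟩ := a
  obtain ⟨r, t⟩ := b
  simp only at ha hb ⊢
  set D := (p - r) ^ 2 + (s + t) ^ 2 with hD
  have hDp : 0 < D := by positivity
  have hw : 0 < D * (s * t) := by positivity
  set w := √(D * (s * t)) with hwdef
  have hwp : 0 < w := Real.sqrt_pos.2 hw
  have hw2 : w ^ 2 = D * (s * t) := Real.sq_sqrt hw.le
  refine ⟨⟨(p * t + r * s) / (s + t), w / (s + t)⟩, by simp only; positivity, fun x => ?_⟩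
  have key : (x - (p * t + r * s) / (s + t)) ^ 2 + (w / (s + t)) ^ 2
      = (((x - p) ^ 2 + s ^ 2) * t + ((x - r) ^ 2 + t ^ 2) * s) / (s + t) := by
    rw [div_pow, hw2, hD]
    field_simp
    ring
  have h2 : qf x ⟨(p * t + r * s) / (s + t), w / (s + t)⟩ ^ 2 =
      (((x - p) ^ 2 + s ^ 2) * t + ((x - r) ^ 2 + t ^ 2) * s) ^ 2 / (D * (s * t)) := by
    unfold qf
    simp only
    rw [key, ← hw2]
    field_simp
  rw [h2]
  unfold qf
  simp only
  rw [div_mul_div_comm, div_sub_div _ _ (by positivity) hw.ne', div_eq_div_iff (by positivity) hw.ne', hD]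
  ring

lemma uniq_aux {n : ℕ} (hn : 3 ≤ n) (x : Fin n → ℝ) (hx : Function.Injective x) (a b : ℂ)
    (ha : 0 < a.im) (hb : 0 < b.im)
    (hma : ∀ θ : ℂ, 0 < θ.im → ∏ j, qf (x j) a ≤ ∏ j, qf (x j) θ)
    (hmb : ∀ θ : ℂ, 0 < θ.im → ∏ j, qf (x j) b ≤ ∏ j, qf (x j) θ) : a = b := by
  obtain ⟨m, hm, hid⟩ := mid_exists a b ha hb
  by_contra hne
  have hD : 0 < ((a.re - b.re) ^ 2 + (a.im + b.im) ^ 2) * (a.im * b.im) := by positivity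
  have hle : ∀ j, qf (x j) m ^ 2 ≤ qf (x j) a * qf (x j) b := fun j => by
    rw [← sub_nonneg, hid]; positivity
  have hlt : ∃ j, qf (x j) m ^ 2 < qf (x j) a * qf (x j) b := by
    by_contra! hcon
    have hz : ∀ j, (b.re - a.re) * (x j - a.re) * (x j - b.re) + a.im ^ 2 * (x j - b.re)
        - b.im ^ 2 * (x j - a.re) = 0 := fun j => by
      have h1 := hid (x j)
      rw [le_antisymm (hle j) (hcon j), sub_self, eq_comm, div_eq_zero_iff] at h1
      rcases h1 with h1 | h1
      · exact pow_eq_zero_iff (two_ne_zero) |>.1 h1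
      · exact absurd h1 hD.ne'
    have e0 := hz ⟨0, by omega⟩
    have e1 := hz ⟨1, by omega⟩
    have e2 := hz ⟨2, by omega⟩
    have n01 : x ⟨0, by omega⟩ - x ⟨1, by omega⟩ ≠ 0 := sub_ne_zero.2 (hx.ne (by simp))
    have n02 : x ⟨0, by omega⟩ - x ⟨2, by omega⟩ ≠ 0 := sub_ne_zero.2 (hx.ne (by simp))
    have n12 : x ⟨1, by omega⟩ - x ⟨2, by omega⟩ ≠ 0 := sub_ne_zero.2 (hx.ne (by simp))
    generalize x ⟨0, by omega⟩ = u at *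
    generalize x ⟨1, by omega⟩ = v at *
    generalize x ⟨2, by omega⟩ = w at *
    have f1 : (b.re - a.re) * (u + v - a.re - b.re) + a.im ^ 2 - b.im ^ 2 = 0 := by
      apply mul_left_cancel₀ n01; linear_combination e0 - e1
    have f2 : (b.re - a.re) * (u + w - a.re - b.re) + a.im ^ 2 - b.im ^ 2 = 0 := by
      apply mul_left_cancel₀ n02; linear_combination e0 - e2
    have f3 : b.re - a.re = 0 := by
      apply mul_left_cancel₀ n12; linear_combination f1 - f2
    rw [f3] at f1
    have f4 : a.im = b.im := by
      have : (a.im - b.im) * (a.im + b.im) = 0 := by linear_combination f1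
      rcases mul_eq_zero.1 this with h | h <;> linarith
    exact hne (Complex.ext (by linarith) f4)
  obtain ⟨j, hj⟩ := hlt
  have hprod : ∏ j, qf (x j) m ^ 2 < ∏ j, qf (x j) a * qf (x j) b :=
    Finset.prod_lt_prod (fun i _ => pow_pos (qf_pos _ _ hm) 2) (fun i _ => hle i)
      ⟨j, Finset.mem_univ _, hj⟩
  rw [Finset.prod_pow, Finset.prod_mul_distrib, sq] at hprod
  have := mul_le_mul (hma m hm) (hmb m hm) (Finset.prod_nonneg fun j _ => (qf_pos _ _ hb).le)
    (Finset.prod_nonneg fun j _ => (qf_pos _ _ hm).le)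
  linarith

lemma qf_pair (x y : ℝ) (θ : ℂ) (h : 0 < θ.im) : (x - y) ^ 2 ≤ qf x θ * qf y θ := by
  unfold qf
  rw [div_mul_div_comm, le_div_iff₀ (by positivity)]
  nlinarith [sq_nonneg ((x - θ.re) * (y - θ.re) + θ.im ^ 2)]

lemma prod_ge {ι : Type*} [DecidableEq ι] (s : Finset ι) (hs : 2 ≤ s.card) (q : ι → ℝ) (δ : ℝ)
    (hδ : 0 < δ) (hq : ∀ i, 0 < q i) (hp : ∀ i ∈ s, ∀ j ∈ s, i ≠ j → δ ^ 2 ≤ q i * q j) :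
    δ ^ s.card ≤ ∏ i ∈ s, q i := by
  by_cases hall : ∀ i ∈ s, δ ≤ q i
  · rw [← Finset.prod_const]
    exact Finset.prod_le_prod (fun _ _ => hδ.le) hall
  · push Not at hall
    obtain ⟨a, ha, hqa⟩ := hall
    have hoth : ∀ j ∈ s.erase a, δ ≤ q j := fun j hj => by
      obtain ⟨h1, h2⟩ := Finset.mem_erase.1 hj
      have := hp a ha j h2 h1.symm
      by_contra! hc
      nlinarith [hq a, hq j]
    have hc : (s.erase a).card = s.card - 1 := Finset.card_erase_of_mem ha
    obtain ⟨b, hb⟩ : (s.erase a).Nonempty := Finset.card_pos.1 (by omega)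
    have hcb : ((s.erase a).erase b).card = s.card - 1 - 1 := by
      rw [Finset.card_erase_of_mem hb, hc]
    rw [← Finset.mul_prod_erase s q ha, ← Finset.mul_prod_erase _ q hb, ← mul_assoc]
    obtain ⟨h1, h2⟩ := Finset.mem_erase.1 hb
    have e : δ ^ s.card = δ ^ 2 * ∏ i ∈ (s.erase a).erase b, δ := by
      rw [Finset.prod_const, hcb, ← pow_add]; congr 1; omega
    rw [e]
    refine mul_le_mul (hp a ha b h2 h1.symm)
      (Finset.prod_le_prod (fun _ _ => hδ.le) fun i hi => hoth i (Finset.mem_of_mem_erase hi))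
      (Finset.prod_nonneg fun _ _ => hδ.le) (mul_pos (hq _) (hq _)).le

lemma bounds {n : ℕ} (hn : 3 ≤ n) (x : Fin n → ℝ) (θ : ℂ) (h : 0 < θ.im) (δ C : ℝ) (hδ : 0 < δ)
    (hsep : ∀ i j, i ≠ j → δ ≤ |x i - x j|) (hC : ∏ j, qf (x j) θ ≤ C) (k : Fin n) :
    qf (x k) θ ≤ C / δ ^ (n - 1) := by
  rw [le_div_iff₀ (by positivity)]
  refine le_trans ?_ hC
  rw [← Finset.mul_prod_erase _ _ (Finset.mem_univ k)]
  refine mul_le_mul_of_nonneg_left ?_ (qf_pos _ _ h).le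
  have hc : (Finset.univ.erase k).card = n - 1 := by simp
  rw [← hc]
  refine prod_ge _ (by omega) (fun i => qf (x i) θ) δ hδ (fun i => qf_pos _ _ h) fun i _ j _ hij => ?_
  refine le_trans ?_ (qf_pair _ _ θ h)
  rw [← sq_abs (x i - x j)]
  exact pow_le_pow_left₀ hδ.le (hsep i j hij) 2

lemma qf_tendsto {ι : Type*} {l : Filter ι} {f : ι → ℝ} {g : ι → ℂ} {a : ℝ} {b : ℂ}
    (hb : 0 < b.im) (hf : Tendsto f l (nhds a)) (hg : Tendsto g l (nhds b)) :
    Tendsto (fun i => qf (f i) (g i)) l (nhds (qf a b)) := by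
  have hr := (Complex.continuous_re.tendsto b).comp hg
  have hi := (Complex.continuous_im.tendsto b).comp hg
  exact (((hf.sub hr).pow 2).add (hi.pow 2)).div hi hb.ne'

theorem stmt_9 (n : ℕ) (hn : 3 ≤ n)
    (x : ℕ → Fin n → ℝ) (xlim : Fin n → ℝ)
    (hx : ∀ m, Function.Injective (x m)) (hxlim : Function.Injective xlim)
    (θhat : ℕ → ℂ) (θhatlim : ℂ)
    (hθ : ∀ m, 0 < (θhat m).im)
    (hmax : ∀ m, ∀ θ : ℂ, 0 < θ.im → cauchyL (x m) θ ≤ cauchyL (x m) (θhat m))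
    (hθlim : 0 < θhatlim.im)
    (hmaxlim : ∀ θ : ℂ, 0 < θ.im → cauchyL xlim θ ≤ cauchyL xlim θhatlim)
    (hconv : Tendsto x atTop (nhds xlim)) :
    Tendsto θhat atTop (nhds θhatlim) := by
  have hmin : ∀ m, ∀ θ : ℂ, 0 < θ.im →
      ∏ j, qf (x m j) (θhat m) ≤ ∏ j, qf (x m j) θ := fun m θ h =>
    le_iff_aux _ _ _ h (hθ m) (hmax m θ h)
  have hminlim : ∀ θ : ℂ, 0 < θ.im →
      ∏ j, qf (xlim j) θhatlim ≤ ∏ j, qf (xlim j) θ := fun θ h =>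
    le_iff_aux _ _ _ h hθlim (hmaxlim θ h)
  have hcj : ∀ j, Tendsto (fun m => x m j) atTop (nhds (xlim j)) := tendsto_pi_nhds.1 hconv
  have hI : (0:ℝ) < Complex.I.im := by simp
  -- constants
  obtain ⟨δ, hδ, hsep⟩ : ∃ δ > 0, ∀ᶠ m in atTop, ∀ i j, i ≠ j → δ ≤ |x m i - x m j| := by
    have hpt : ∀ i j, ∀ᶠ δ in nhdsWithin (0:ℝ) (Set.Ioi 0), i ≠ j → δ < |xlim i - xlim j| := by
      intro i j
      by_cases hij : i = j
      · simp [hij]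
      · have : 0 < |xlim i - xlim j| := abs_pos.2 (sub_ne_zero.2 (hxlim.ne hij))
        filter_upwards [nhdsWithin_le_nhds (Iio_mem_nhds this)] with d hd _ using hd
    have hall := eventually_all.2 fun i => eventually_all.2 (hpt i)
    obtain ⟨δ, h1, h2⟩ := (hall.and self_mem_nhdsWithin).exists
    refine ⟨δ, h2, eventually_all.2 fun i => eventually_all.2 fun j => ?_⟩
    by_cases hij : i = j
    · simp [hij]
    · filter_upwards [((hcj i).sub (hcj j)).abs.eventually_const_le (h1 i j hij)] with m hm _ using hm
  obtain ⟨C, hC⟩ : ∃ C, ∀ᶠ m in atTop, ∏ j, qf (x m j) Complex.I ≤ C :=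
    ⟨_, (tendsto_finsetProd _ fun j _ => qf_tendsto hI (hcj j) tendsto_const_nhds).eventually_le_const
      (lt_add_one _)⟩
  let k0 : Fin n := ⟨0, by omega⟩
  let k1 : Fin n := ⟨1, by omega⟩
  have hk : k0 ≠ k1 := by simp [k0, k1]
  have hR := (hcj k0).abs.eventually_le_const (lt_add_one _)
  set B := C / δ ^ (n - 1) with hB
  set R := |xlim k0| + 1 with hRd
  set K : Set ℂ := Set.Icc (-(R + B)) (R + B) ×ℂ Set.Icc (δ ^ 2 / (4 * B)) B with hKd
  have hK : IsCompact K := isCompact_Icc.reProdIm isCompact_Icc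
  have hev : ∀ᶠ m in atTop, θhat m ∈ K ∧ 0 < B := by
    filter_upwards [hsep, hC, hR] with m h1 h2 h3
    have hb := bounds hn (x m) (θhat m) (hθ m) δ C hδ h1 ((hmin m _ hI).trans h2)
    have b0 := hb k0
    have b1 := hb k1
    have s01 := h1 k0 k1 hk
    have hBp : 0 < B := (qf_pos _ _ (hθ m)).trans_le b0
    have him := hθ m
    rw [← hB] at b0 b1
    unfold qf at b0 b1
    rw [div_le_iff₀ him] at b0 b1
    generalize x m k0 = u at *
    generalize x m k1 = v at *
    generalize θhat m = z at *
    have hiB : z.im ≤ B := by nlinarith [sq_nonneg (u - z.re)]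
    have hre : |u - z.re| ≤ B := abs_le_of_sq_le_sq (by nlinarith) hBp.le
    have hs : δ ^ 2 ≤ (u - v) ^ 2 := by
      rw [← sq_abs (u - v)]; exact pow_le_pow_left₀ hδ.le s01 2
    rw [abs_le] at hre h3
    refine ⟨Complex.mem_reProdIm.2 ⟨⟨by linarith, by linarith⟩, ?_, hiB⟩, hBp⟩
    rw [div_le_iff₀ (by positivity)]
    nlinarith [sq_nonneg ((u - z.re) + (v - z.re))]
  have hBp : 0 < B := hev.exists.choose_spec.2
  refine hK.tendsto_nhds_of_unique_mapClusterPt (hev.mono fun _ h => h.1) fun y hy hcl => ?_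
  have hyim : 0 < y.im := lt_of_lt_of_le (by positivity) (Complex.mem_reProdIm.1 hy).2.1
  obtain ⟨φ, hφ, hlim⟩ := TopologicalSpace.FirstCountableTopology.tendsto_subseq hcl
  refine uniq_aux hn xlim hxlim y θhatlim hyim hθlim (fun θ h => ?_) hminlim
  have hcφ : ∀ j, Tendsto (fun m => x (φ m) j) atTop (nhds (xlim j)) := fun j =>
    (hcj j).comp hφ.tendsto_atTop
  exact le_of_tendsto_of_tendsto'
    (tendsto_finsetProd _ fun j _ => qf_tendsto hyim (hcφ j) hlim)
    (tendsto_finsetProd _ fun j _ => qf_tendsto h (hcφ j) tendsto_const_nhds)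
    fun m => hmin (φ m) θ h
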